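/- If U ⊆ 𝔸 is an upper generating set, then 𝒞⁻(U) := 𝔸 \ (𝒰ℒ(U) ∪ ℒ𝒰ℒ(U)) is a circloid. Similarly, if L ⊆ 𝔸 is a lower generating set, then 𝒞⁺(L) := 𝔸 \ (ℒ𝒰(L) ∪ 𝒰ℒ𝒰(L)) is a circloid. -/

import Mathlib

open Filter Topology

local notation "⟪" x ", " y "⟫" => @inner ℝ _ _ x y

noncomputable section

/-- The open annulus `𝔸 = 𝕋¹ × ℝ`. -/
abbrev Ann := AddCircle (1 : ℝ) × ℝ

/-- `S ⊆ 𝔸` is unbounded from above in the `ℝ`-coordinate. -/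
def UnbAbove (S : Set Ann) : Prop := ¬ BddAbove (Prod.snd '' S)

/-- `S ⊆ 𝔸` is unbounded from below in the `ℝ`-coordinate. -/
def UnbBelow (S : Set Ann) : Prop := ¬ BddBelow (Prod.snd '' S)

/-- `S ⊆ 𝔸` is bounded (equivalently, bounded in the `ℝ`-coordinate). -/
def BoundedA (S : Set Ann) : Prop := BddAbove (Prod.snd '' S) ∧ BddBelow (Prod.snd '' S)

/-- `E ⊆ 𝔸` is essential: no connected component of its complement is unbounded both
above and below. -/
def EssentialA (E : Set Ann) : Prop :=
  ∀ x ∈ Eᶜ, ¬ (UnbAbove (connectedComponentIn Eᶜ x) ∧ UnbBelow (connectedComponentIn Eᶜ x))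

/-- An annular continuum: a compact connected set whose complement has exactly two
connected components, both unbounded. -/
def IsAnnularContinuum (E : Set Ann) : Prop :=
  IsCompact E ∧ IsConnected E ∧
  (∀ x ∈ Eᶜ, ¬ BoundedA (connectedComponentIn Eᶜ x)) ∧
  ∃ x y, x ∈ Eᶜ ∧ y ∈ Eᶜ ∧ connectedComponentIn Eᶜ x ≠ connectedComponentIn Eᶜ y ∧
    ∀ z ∈ Eᶜ, connectedComponentIn Eᶜ z = connectedComponentIn Eᶜ x ∨
      connectedComponentIn Eᶜ z = connectedComponentIn Eᶜ y

/-- A circloid: an annular continuum containing no strictly smaller annular continuum. -/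
def IsCircloidA (C : Set Ann) : Prop :=
  IsAnnularContinuum C ∧ ∀ E ⊆ C, IsAnnularContinuum E → E = C

/-- `ℒ(U)`: the connected component of `𝔸 \ cl(U)` unbounded from below (for a
generating set it is unique; in general we take the union of all components of
`𝔸 \ cl(U)` unbounded from below). -/
def lowerComp (U : Set Ann) : Set Ann :=
  {z | z ∈ (closure U)ᶜ ∧ UnbBelow (connectedComponentIn (closure U)ᶜ z)}

/-- `𝒰(L)`: the connected component of `𝔸 \ cl(L)` unbounded from above. -/
def upperComp (L : Set Ann) : Set Ann :=
  {z | z ∈ (closure L)ᶜ ∧ UnbAbove (connectedComponentIn (closure L)ᶜ z)}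

/-- An upper generating set: bounded from below with essential closure. -/
def UpperGen (U : Set Ann) : Prop := BddBelow (Prod.snd '' U) ∧ EssentialA (closure U)

/-- A lower generating set: bounded from above with essential closure. -/
def LowerGen (L : Set Ann) : Prop := BddAbove (Prod.snd '' L) ∧ EssentialA (closure L)

/-- `𝒞⁻(U) = 𝔸 \ (𝒰ℒ(U) ∪ ℒ𝒰ℒ(U))`. -/
def Cminus (U : Set Ann) : Set Ann :=
  (upperComp (lowerComp U) ∪ lowerComp (upperComp (lowerComp U)))ᶜ

/-- `𝒞⁺(L) = 𝔸 \ (ℒ𝒰(L) ∪ 𝒰ℒ𝒰(L))`. -/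
def Cplus (L : Set Ann) : Set Ann :=
  (lowerComp (upperComp L) ∪ upperComp (lowerComp (upperComp L)))ᶜ

/-!
Call two disjoint domains `V`, `W` of the annulus *mutual components* if each is a connected
component of the complement of the closure of the other. For an upper generating set `U`, put
`L = ℒ(U)`, `V = 𝒰(L)` and `W = ℒ(V)`. Then `L ⊆ W`, so a connected set avoiding `cl W` also avoids
`L`, and hence `V` and `W` are mutual components. This relation is symmetric, and it is the only
property of the construction that matters.

*Minimality.* The complement of an annular continuum `E ⊆ 𝔸 \ (V ∪ W)` consists of two disjoint
domains `V' ⊇ V` and `W' ⊇ W`. As `V'` is connected and avoids `cl W`, it equals `V`, and likewise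
`W' = W`.

*Connectedness.* The complement of a component of the complement of a connected closed set is
connected, so `𝔸 \ V` and `𝔸 \ W` are connected closed sets covering `𝔸`. Adding the lower end as a
point turns the annulus into the plane, which is simply connected and therefore unicoherent: two
connected closed sets covering it have connected intersection.
-/

open Set

section Components

variable {X : Type*} [TopologicalSpace X] {C D K S T V W : Set X} {x z : X}

/-- `C` is a connected component of the subspace `S`, as a predicate on sets rather than through
a base point. -/
def IsComponentIn (C S : Set X) : Prop :=
  ∃ x ∈ S, connectedComponentIn S x = C

lemma isComponentIn_connectedComponentIn (hx : x ∈ S) :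
    IsComponentIn (connectedComponentIn S x) S :=
  ⟨x, hx, rfl⟩

namespace IsComponentIn

lemma subset (hC : IsComponentIn C S) : C ⊆ S := by
  obtain ⟨x, -, rfl⟩ := hC
  exact connectedComponentIn_subset S x

lemma isConnected (hC : IsComponentIn C S) : IsConnected C := by
  obtain ⟨x, hx, rfl⟩ := hC
  exact isConnected_connectedComponentIn_iff.2 hx

lemma isOpen [LocallyConnectedSpace X] (hC : IsComponentIn C S) (hS : IsOpen S) : IsOpen C := by
  obtain ⟨x, -, rfl⟩ := hC
  exact hS.connectedComponentIn

lemma connectedComponentIn_eq (hC : IsComponentIn C S) (hz : z ∈ C) :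
    connectedComponentIn S z = C := by
  obtain ⟨x, -, rfl⟩ := hC
  exact (_root_.connectedComponentIn_eq hz).symm

lemma subset_of_isPreconnected (hC : IsComponentIn C S) (hT : IsPreconnected T) (hTS : T ⊆ S)
    (hTC : (T ∩ C).Nonempty) : T ⊆ C := by
  obtain ⟨z, hzT, hzC⟩ := hTC
  rw [← hC.connectedComponentIn_eq hzC]
  exact hT.subset_connectedComponentIn hzT hTS

lemma eq_of_inter_nonempty (hC : IsComponentIn C S) (hD : IsComponentIn D S)
    (hCD : (C ∩ D).Nonempty) : C = D := by
  obtain ⟨z, hzC, hzD⟩ := hCD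
  rw [← hC.connectedComponentIn_eq hzC, hD.connectedComponentIn_eq hzD]

lemma closure_inter_nonempty [PreconnectedSpace X] [LocallyConnectedSpace X] (hK : IsClosed K)
    (hK₀ : K.Nonempty) (hC : IsComponentIn C Kᶜ) : (closure C ∩ K).Nonempty := by
  by_contra hdisj
  have hsub : closure C ⊆ Kᶜ := fun x hxC hxK => hdisj ⟨x, hxC, hxK⟩
  have hclosed : closure C ⊆ C :=
    hC.subset_of_isPreconnected hC.isConnected.isPreconnected.closure hsub
      (hC.isConnected.nonempty.mono fun _ hx => ⟨subset_closure hx, hx⟩)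
  have huniv : C = univ :=
    IsClopen.eq_univ ⟨isClosed_of_closure_subset hclosed, hC.isOpen hK.isOpen_compl⟩
      hC.isConnected.nonempty
  obtain ⟨k, hk⟩ := hK₀
  exact hC.subset (huniv ▸ mem_univ k) hk

-- `Cᶜ` is the union of `K` with the closures of the other components, each of which meets `K`.
lemma isPreconnected_compl [PreconnectedSpace X] [LocallyConnectedSpace X] (hK : IsClosed K)
    (hKconn : IsConnected K) (hC : IsComponentIn C Kᶜ) : IsPreconnected Cᶜ := by
  obtain ⟨k, hk⟩ := hKconn.nonempty
  have hKC : K ⊆ Cᶜ := subset_compl_comm.1 hC.subset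
  refine isPreconnected_of_forall k fun y hy => ?_
  by_cases hyK : y ∈ K
  · exact ⟨K, hKC, hk, hyK, hKconn.isPreconnected⟩
  set D := connectedComponentIn Kᶜ y
  have hD : IsComponentIn D Kᶜ := isComponentIn_connectedComponentIn hyK
  have hyD : y ∈ D := mem_connectedComponentIn hyK
  have hCD : Disjoint C (closure D) := by
    refine Disjoint.closure_right ?_ (hC.isOpen hK.isOpen_compl)
    rw [disjoint_iff_inter_eq_empty, ← not_nonempty_iff_eq_empty]
    exact fun hne => hy (hC.eq_of_inter_nonempty hD hne ▸ hyD)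
  obtain ⟨z, hzD, hzK⟩ := hD.closure_inter_nonempty hK hKconn.nonempty
  exact ⟨K ∪ closure D, union_subset hKC (subset_compl_iff_disjoint_left.2 hCD), Or.inl hk,
    Or.inr (subset_closure hyD), hKconn.isPreconnected.union z hzK hzD
      hD.isConnected.isPreconnected.closure⟩

end IsComponentIn

lemma isComponentIn_union_left (hVo : IsOpen V) (hWo : IsOpen W) (hV : IsConnected V)
    (hVW : Disjoint V W) : IsComponentIn V (V ∪ W) := by
  obtain ⟨v, hv⟩ := hV.nonempty
  refine ⟨v, Or.inl hv, Subset.antisymm ?_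
    (hV.isPreconnected.subset_connectedComponentIn hv subset_union_left)⟩
  exact isPreconnected_connectedComponentIn.subset_left_of_subset_union hVo hWo hVW
    (connectedComponentIn_subset _ _) ⟨v, mem_connectedComponentIn (Or.inl hv), hv⟩

lemma compl_union_nonempty [PreconnectedSpace X] (hVo : IsOpen V) (hWo : IsOpen W)
    (hV : V.Nonempty) (hW : W.Nonempty) (hVW : Disjoint V W) : (V ∪ W)ᶜ.Nonempty := by
  rw [nonempty_compl]
  intro huniv
  obtain ⟨v, hv⟩ := hV
  obtain ⟨w, hw⟩ := hW
  have hsub : univ ⊆ V :=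
    isPreconnected_univ.subset_left_of_subset_union hVo hWo hVW huniv.ge ⟨v, mem_univ v, hv⟩
  exact disjoint_left.1 hVW (hsub (mem_univ w)) hw

/-- Each of `V` and `W` is a connected component of the complement of the closure of the other.
This symmetric relation describes the two domains complementary to a circloid. -/
structure AreMutualComponents (V W : Set X) : Prop where
  left : IsComponentIn V (closure W)ᶜ
  right : IsComponentIn W (closure V)ᶜ

namespace AreMutualComponents

lemma symm (h : AreMutualComponents V W) : AreMutualComponents W V :=
  ⟨h.right, h.left⟩

lemma disjoint (h : AreMutualComponents V W) : Disjoint V W :=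
  (subset_compl_iff_disjoint_right.1 h.left.subset).mono_right subset_closure

lemma isOpen_left [LocallyConnectedSpace X] (h : AreMutualComponents V W) : IsOpen V :=
  h.left.isOpen isClosed_closure.isOpen_compl

lemma isPreconnected_compl_left [PreconnectedSpace X] [LocallyConnectedSpace X]
    (h : AreMutualComponents V W) : IsPreconnected Vᶜ :=
  h.left.isPreconnected_compl isClosed_closure h.right.isConnected.closure

lemma subset_left (h : AreMutualComponents V W) (hTo : IsOpen T) (hT : IsPreconnected T)
    (hTW : Disjoint T W) (hVT : V ⊆ T) : T ⊆ V :=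
  h.left.subset_of_isPreconnected hT
    (subset_compl_iff_disjoint_right.2 (hTW.closure_right hTo))
    (h.left.isConnected.nonempty.mono fun _ hv => ⟨hVT hv, hv⟩)

end AreMutualComponents

lemma areMutualComponents_of_subset [LocallyConnectedSpace X]
    (hV : IsComponentIn V (closure S)ᶜ) (hW : IsComponentIn W (closure V)ᶜ) (hSW : S ⊆ W) :
    AreMutualComponents V W := by
  refine ⟨?_, hW⟩
  have hVo : IsOpen V := hV.isOpen isClosed_closure.isOpen_compl
  have hVW : V ⊆ (closure W)ᶜ := by
    refine subset_compl_iff_disjoint_right.2 (Disjoint.closure_right ?_ hVo)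
    exact (subset_compl_iff_disjoint_left.1 hW.subset).mono_left subset_closure
  obtain ⟨v, hv⟩ := hV.isConnected.nonempty
  refine ⟨v, hVW hv, Subset.antisymm ?_
    (hV.isConnected.isPreconnected.subset_connectedComponentIn hv hVW)⟩
  rw [← hV.connectedComponentIn_eq hv]
  exact connectedComponentIn_mono v (compl_subset_compl.2 (closure_mono hSW))

end Components

section Ends

variable {X : Type*} [TopologicalSpace X] {l m : Filter X} {C S T : Set X}

/-- A filter with a basis of connected open sets. The neighbourhood filter of an end of the
annulus is of this kind; treating ends as filters makes the upper and lower ends interchangeable. -/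
def IsConnectedEnd (l : Filter X) : Prop :=
  ∀ S ∈ l, ∃ T ∈ l, T ⊆ S ∧ IsOpen T ∧ IsConnected T

/-- The union of the components of `(closure S)ᶜ` that accumulate at `l`. It is a single component
as soon as `l` is a connected end and `S` avoids a neighbourhood of it. This is the common
form of `lowerComp` and `upperComp`. -/
def endComponent (l : Filter X) (S : Set X) : Set X :=
  {z | z ∈ (closure S)ᶜ ∧ ∃ᶠ p in l, p ∈ connectedComponentIn (closure S)ᶜ z}

lemma endComponent_subset (l : Filter X) (S : Set X) : endComponent l S ⊆ (closure S)ᶜ :=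
  fun _ hz => hz.1

lemma compl_endComponent_mem (m : Filter X) (hS : S ∈ l) : (endComponent m S)ᶜ ∈ l :=
  mem_of_superset hS fun _ hp hp' => endComponent_subset m S hp' (subset_closure hp)

lemma endComponent_eq_of_isComponentIn [l.NeBot] (hC : IsComponentIn C (closure S)ᶜ)
    (hCl : C ∈ l) : endComponent l S = C := by
  ext z
  constructor
  · rintro ⟨hz, hfreq⟩
    obtain ⟨p, hpz, hpC⟩ := (hfreq.and_eventually hCl).exists
    rw [← (isComponentIn_connectedComponentIn hz).eq_of_inter_nonempty hC ⟨p, hpz, hpC⟩]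
    exact mem_connectedComponentIn hz
  · intro hz
    refine ⟨hC.subset hz, ?_⟩
    rw [hC.connectedComponentIn_eq hz]
    exact Eventually.frequently hCl

namespace IsConnectedEnd

lemma neBot (hl : IsConnectedEnd l) : l.NeBot := by
  refine forall_mem_nonempty_iff_neBot.1 fun S hS => ?_
  obtain ⟨T, -, hTS, -, hT⟩ := hl S hS
  exact hT.nonempty.mono hTS

lemma exists_isComponentIn_mem (hl : IsConnectedEnd l) (hS : Sᶜ ∈ l) :
    ∃ C ∈ l, IsComponentIn C (closure S)ᶜ := by
  obtain ⟨T, hTl, hTS, hTo, hT⟩ := hl _ hS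
  have hTcl : T ⊆ (closure S)ᶜ :=
    subset_compl_iff_disjoint_right.2
      ((subset_compl_iff_disjoint_right.1 hTS).closure_right hTo)
  obtain ⟨x, hx⟩ := hT.nonempty
  exact ⟨_, mem_of_superset hTl (hT.isPreconnected.subset_connectedComponentIn hx hTcl),
    isComponentIn_connectedComponentIn (hTcl hx)⟩

lemma isComponentIn_endComponent (hl : IsConnectedEnd l) (hS : Sᶜ ∈ l) :
    IsComponentIn (endComponent l S) (closure S)ᶜ := by
  have := hl.neBot
  obtain ⟨C, hCl, hC⟩ := hl.exists_isComponentIn_mem hS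
  rwa [endComponent_eq_of_isComponentIn hC hCl]

lemma endComponent_mem (hl : IsConnectedEnd l) (hS : Sᶜ ∈ l) : endComponent l S ∈ l := by
  have := hl.neBot
  obtain ⟨C, hCl, hC⟩ := hl.exists_isComponentIn_mem hS
  rwa [endComponent_eq_of_isComponentIn hC hCl]

lemma subset_endComponent (hl : IsConnectedEnd l) (hT : IsPreconnected T)
    (hTS : T ⊆ (closure S)ᶜ) (hTl : T ∈ l) : T ⊆ endComponent l S := by
  have := hl.neBot
  have hS : Sᶜ ∈ l := mem_of_superset hTl (hTS.trans (compl_subset_compl.2 subset_closure))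
  exact (hl.isComponentIn_endComponent hS).subset_of_isPreconnected hT hTS
    (nonempty_of_mem (inter_mem hTl (hl.endComponent_mem hS)))

theorem areMutualComponents_endComponent [LocallyConnectedSpace X] (hl : IsConnectedEnd l)
    (hm : IsConnectedEnd m) (hS : Sᶜ ∈ l) (hL : (endComponent l S)ᶜ ∈ m) :
    AreMutualComponents (endComponent m (endComponent l S))
      (endComponent l (endComponent m (endComponent l S))) := by
  have hLcomp : IsComponentIn (endComponent l S) (closure S)ᶜ := hl.isComponentIn_endComponent hS
  have hLl : endComponent l S ∈ l := hl.endComponent_mem hS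
  generalize endComponent l S = L at *
  have hLo : IsOpen L := hLcomp.isOpen isClosed_closure.isOpen_compl
  have hLV : L ⊆ (closure (endComponent m L))ᶜ := by
    refine subset_compl_iff_disjoint_right.2 (Disjoint.closure_right ?_ hLo)
    exact (subset_compl_iff_disjoint_left.1 (endComponent_subset m L)).mono_left subset_closure
  exact areMutualComponents_of_subset (hm.isComponentIn_endComponent hL)
    (hl.isComponentIn_endComponent (compl_endComponent_mem m hLl))
    (hl.subset_endComponent hLcomp.isConnected.isPreconnected hLV hLl)

end IsConnectedEnd

end Ends

section Unicoherence

variable {X Y : Type*} [TopologicalSpace X] [TopologicalSpace Y] {F G S : Set X}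

/-- Any two connected closed sets covering `X` have connected intersection. The connectedness of
`X` itself, usually part of the notion of unicoherence, is not included. -/
def IsUnicoherent (X : Type*) [TopologicalSpace X] : Prop :=
  ∀ F G : Set X, IsClosed F → IsClosed G → IsPreconnected F → IsPreconnected G →
    F ∪ G = univ → IsPreconnected (F ∩ G)

lemma exists_continuousMap_eqOn_eqOn (hF : IsClosed F) (hG : IsClosed G) (hFG : F ∪ G = univ)
    {f g : X → Y} (hf : ContinuousOn f F) (hg : ContinuousOn g G) (hfg : EqOn f g (F ∩ G)) :
    ∃ φ : C(X, Y), EqOn φ f F ∧ EqOn φ g G := by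
  classical
  have hφF : EqOn (F.piecewise f g) f F := piecewise_eqOn F f g
  have hφG : EqOn (F.piecewise f g) g G := fun x hx => by
    by_cases hxF : x ∈ F
    · rw [hφF hxF, hfg ⟨hxF, hx⟩]
    · exact piecewise_eq_of_notMem F f g hxF
  refine ⟨⟨F.piecewise f g, ?_⟩, hφF, hφG⟩
  rw [← continuousOn_univ, ← hFG]
  exact (hf.congr hφF).union_of_isClosed (hg.congr hφG) hF hG

lemma sub_eq_sub_of_coe_addCircle_eq {p : ℝ} (hS : IsPreconnected S) {f g : X → ℝ}
    (hf : ContinuousOn f S) (hg : ContinuousOn g S)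
    (hfg : ∀ x ∈ S, (f x : AddCircle p) = g x) {a b : X} (ha : a ∈ S) (hb : b ∈ S) :
    f a - g a = f b - g b :=
  hS.constant_of_mapsTo (T := (AddSubgroup.zmultiples p : Set ℝ))
    (SetLike.isDiscrete_iff_discreteTopology.2 inferInstance) (hf.sub hg)
    (fun x hx => QuotientAddGroup.eq_iff_sub_mem.1 (hfg x hx)) ha hb

-- If `F ∩ G` were the union of disjoint closed sets `P` and `Q`, an Urysohn function `u` for them
-- would give the map `u` on `F`, `-u` on `G` to `ℝ / 2ℤ`. A lift of it to `ℝ` would increase by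
-- `1` from `P` to `Q` along `F`, but decrease by `1` along `G`.
theorem isUnicoherent_of_simplyConnectedSpace [NormalSpace X] [SimplyConnectedSpace X]
    [LocallyPathConnectedSpace X] : IsUnicoherent X := by
  intro F G hF hG hFconn hGconn hFG
  rw [isPreconnected_closed_iff]
  rintro P Q hP hQ hPQ ⟨a, ha, haP⟩ ⟨b, hb, hbQ⟩
  by_contra hempty
  have hdisj : Disjoint (F ∩ G ∩ P) (F ∩ G ∩ Q) :=
    disjoint_left.2 fun x hxP hxQ => hempty ⟨x, hxP.1, hxP.2, hxQ.2⟩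
  obtain ⟨u, hu₀, hu₁, -⟩ := exists_continuous_zero_one_of_isClosed
    ((hF.inter hG).inter hP) ((hF.inter hG).inter hQ) hdisj
  have hcoe : EqOn (fun x => (u x : AddCircle (2 : ℝ))) (fun x => ((-u x : ℝ) : AddCircle (2 : ℝ)))
      (F ∩ G) := by
    intro x hx
    rcases hPQ hx with hxP | hxQ
    · simp [hu₀ ⟨hx, hxP⟩]
    · have hone : u x = 1 := hu₁ ⟨hx, hxQ⟩
      refine QuotientAddGroup.eq_iff_sub_mem.2 ⟨1, ?_⟩
      norm_num [hone]
  have hmk := AddCircle.continuous_mk' (2 : ℝ)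
  obtain ⟨φ, hφF, hφG⟩ := exists_continuousMap_eqOn_eqOn hF hG hFG
    (hmk.comp u.continuous).continuousOn (hmk.comp u.continuous.neg).continuousOn hcoe
  obtain ⟨t, ht⟩ := QuotientAddGroup.mk_surjective (φ a)
  obtain ⟨θ, ⟨-, hθ⟩, -⟩ :=
    (AddCircle.isCoveringMap_coe (2 : ℝ)).existsUnique_continuousMap_lifts φ a t ht
  have hθF : θ a - u a = θ b - u b :=
    sub_eq_sub_of_coe_addCircle_eq hFconn θ.continuous.continuousOn u.continuous.continuousOn
      (fun x hx => (congrFun hθ x).trans (hφF hx)) ha.1 hb.1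
  have hθG : θ a - -u a = θ b - -u b :=
    sub_eq_sub_of_coe_addCircle_eq hGconn θ.continuous.continuousOn
      u.continuous.neg.continuousOn (fun x hx => (congrFun hθ x).trans (hφG hx)) ha.2 hb.2
  have hua : u a = 0 := hu₀ ⟨ha, haP⟩
  have hub : u b = 1 := hu₁ ⟨hb, hbQ⟩
  linarith

variable {e : X → Y} {y₀ : Y}

lemma isClosed_image_of_compl_mem_comap_nhds (he : IsOpenEmbedding e) (hrange : range e = {y₀}ᶜ)
    (hG : IsClosed G) (hG₀ : Gᶜ ∈ comap e (𝓝 y₀)) : IsClosed (e '' G) := by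
  rw [← isOpen_compl_iff, isOpen_iff_mem_nhds]
  intro y hy
  by_cases hy₀ : y = y₀
  · obtain ⟨N, hN, hNG⟩ := hG₀
    subst hy₀
    refine mem_of_superset hN ?_
    rintro _ hxN ⟨x, hx, rfl⟩
    exact hNG hxN hx
  · obtain ⟨x, rfl⟩ : y ∈ range e := hrange ▸ hy₀
    have hx : x ∈ Gᶜ := fun hx => hy ⟨x, hx, rfl⟩
    exact mem_of_superset (he.image_mem_nhds.2 (hG.isOpen_compl.mem_nhds hx))
      (image_compl_subset he.injective)

lemma isPreconnected_compl_image_compl [(𝓝[≠] y₀).NeBot] (he : IsOpenEmbedding e)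
    (hrange : range e = {y₀}ᶜ) (hFconn : IsPreconnected F) (hF : F ∈ comap e (𝓝 y₀)) :
    IsPreconnected (e '' Fᶜ)ᶜ := by
  have hne : (comap e (𝓝 y₀)).NeBot := by
    rw [comap_neBot_iff_frequently, hrange]
    exact frequently_mem_iff_neBot.2 ‹_›
  have hy₀ : y₀ ∈ closure (e '' F) :=
    mem_closure_of_tendsto tendsto_comap (mem_of_superset hF fun x hx => mem_image_of_mem e hx)
  refine (hFconn.image e he.continuous.continuousOn).subset_closure ?_ fun y hy => ?_
  · exact subset_compl_comm.1 (image_compl_subset he.injective)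
  · by_cases hy' : y = y₀
    · exact hy' ▸ hy₀
    · obtain ⟨x, rfl⟩ : y ∈ range e := hrange ▸ hy'
      exact subset_closure ⟨x, by_contra fun hx => hy ⟨x, hx, rfl⟩, rfl⟩

theorem isPreconnected_inter_of_isOpenEmbedding [(𝓝[≠] y₀).NeBot] (hY : IsUnicoherent Y)
    (he : IsOpenEmbedding e) (hrange : range e = {y₀}ᶜ) (hF : IsClosed F) (hG : IsClosed G)
    (hFconn : IsPreconnected F) (hGconn : IsPreconnected G) (hFG : F ∪ G = univ)
    (hG₀ : Gᶜ ∈ comap e (𝓝 y₀)) : IsPreconnected (F ∩ G) := by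
  have hGF : Gᶜ ⊆ F := compl_subset_iff_union.2 (union_comm F G ▸ hFG)
  have hinter : (e '' Fᶜ)ᶜ ∩ e '' G = e '' (F ∩ G) := by
    rw [inter_comm, ← sdiff_eq, ← image_sdiff he.injective, sdiff_compl, inter_comm]
  have hcover : (e '' Fᶜ)ᶜ ∪ e '' G = univ := by
    rw [← compl_subset_iff_union, compl_compl]
    exact image_mono (compl_subset_iff_union.2 hFG)
  rw [← he.isInducing.isPreconnected_image, ← hinter]
  exact hY _ _ (he.isOpenMap _ hF.isOpen_compl).isClosed_compl
    (isClosed_image_of_compl_mem_comap_nhds he hrange hG hG₀)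
    (isPreconnected_compl_image_compl he hrange hFconn (mem_of_superset hG₀ hGF))
    (hGconn.image e he.continuous.continuousOn) hcover

end Unicoherence

section Annulus

variable {E F G S V W : Set Ann}

/-- The neighbourhood filter of the end `𝕋¹ × {-∞}` of the annulus. -/
def lowerEnd : Filter Ann := comap Prod.snd atBot

/-- The neighbourhood filter of the end `𝕋¹ × {+∞}` of the annulus. -/
def upperEnd : Filter Ann := comap Prod.snd atTop

lemma isConnectedEnd_lowerEnd : IsConnectedEnd lowerEnd := by
  intro S hS
  obtain ⟨c, -, hc⟩ := (atBot_basis_Iio.comap Prod.snd).mem_iff.1 hS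
  refine ⟨Prod.snd ⁻¹' Iio c, preimage_mem_comap (Iio_mem_atBot c), hc,
    isOpen_Iio.preimage continuous_snd, ?_⟩
  rw [← univ_prod]
  exact isConnected_univ.prod isConnected_Iio

lemma isConnectedEnd_upperEnd : IsConnectedEnd upperEnd := by
  intro S hS
  obtain ⟨c, -, hc⟩ := (atTop_basis_Ioi.comap Prod.snd).mem_iff.1 hS
  refine ⟨Prod.snd ⁻¹' Ioi c, preimage_mem_comap (Ioi_mem_atTop c), hc,
    isOpen_Ioi.preimage continuous_snd, ?_⟩
  rw [← univ_prod]
  exact isConnected_univ.prod isConnected_Ioi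

lemma compl_mem_lowerEnd_iff : Sᶜ ∈ lowerEnd ↔ BddBelow (Prod.snd '' S) := by
  simp only [lowerEnd, (atBot_basis_Iio.comap Prod.snd).mem_iff, BddBelow, Set.Nonempty,
    mem_lowerBounds, forall_mem_image, true_and]
  refine exists_congr fun c => ⟨fun h p hp => ?_, fun h p hp hpS => ?_⟩
  · exact not_lt.1 fun hlt => h hlt hp
  · exact (h hpS).not_gt hp

lemma compl_mem_upperEnd_iff : Sᶜ ∈ upperEnd ↔ BddAbove (Prod.snd '' S) := by
  simp only [upperEnd, (atTop_basis_Ioi.comap Prod.snd).mem_iff, BddAbove, Set.Nonempty,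
    mem_upperBounds, forall_mem_image, true_and]
  refine exists_congr fun c => ⟨fun h p hp => ?_, fun h p hp hpS => ?_⟩
  · exact not_lt.1 fun hlt => h hlt hp
  · exact (h hpS).not_gt hp

lemma unbBelow_iff_frequently : UnbBelow S ↔ ∃ᶠ p in lowerEnd, p ∈ S :=
  not_congr compl_mem_lowerEnd_iff.symm

lemma unbAbove_iff_frequently : UnbAbove S ↔ ∃ᶠ p in upperEnd, p ∈ S :=
  not_congr compl_mem_upperEnd_iff.symm

lemma unbBelow_of_mem_lowerEnd (hS : S ∈ lowerEnd) : UnbBelow S := by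
  have := isConnectedEnd_lowerEnd.neBot
  exact unbBelow_iff_frequently.2 (Eventually.frequently hS)

lemma unbAbove_of_mem_upperEnd (hS : S ∈ upperEnd) : UnbAbove S := by
  have := isConnectedEnd_upperEnd.neBot
  exact unbAbove_iff_frequently.2 (Eventually.frequently hS)

lemma lowerComp_eq_endComponent (S : Set Ann) : lowerComp S = endComponent lowerEnd S := by
  simp only [lowerComp, endComponent, unbBelow_iff_frequently]

lemma upperComp_eq_endComponent (S : Set Ann) : upperComp S = endComponent upperEnd S := by
  simp only [upperComp, endComponent, unbAbove_iff_frequently]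

/-- The open embedding `(θ, y) ↦ e^(y + 2πiθ)` of the annulus onto the punctured plane. It takes the
lower end to the puncture. -/
def toPuncturedPlane (p : Ann) : ℂ :=
  Real.exp p.2 * p.1.toCircle

lemma norm_toPuncturedPlane (p : Ann) : ‖toPuncturedPlane p‖ = Real.exp p.2 := by
  rw [toPuncturedPlane, norm_mul, Circle.norm_coe, mul_one, Complex.norm_real, Real.norm_eq_abs,
    Real.abs_exp]

lemma continuous_toPuncturedPlane : Continuous toPuncturedPlane := by
  unfold toPuncturedPlane
  have := AddCircle.continuous_toCircle (T := (1 : ℝ))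
  fun_prop

lemma injective_toPuncturedPlane : Function.Injective toPuncturedPlane := by
  intro p q hpq
  have hsnd : p.2 = q.2 := by
    rw [← Real.exp_injective.eq_iff, ← norm_toPuncturedPlane, ← norm_toPuncturedPlane, hpq]
  have hfst : p.1 = q.1 := by
    rw [toPuncturedPlane, toPuncturedPlane, hsnd] at hpq
    refine AddCircle.injective_toCircle one_ne_zero (Circle.coe_injective ?_)
    exact mul_left_cancel₀ (Complex.ofReal_ne_zero.2 (Real.exp_ne_zero _)) hpq
  exact Prod.ext hfst hsnd

/-- The universal covering map of the annulus, with total space `ℂ` and coordinates chosen so that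
it corresponds to the exponential map under `toPuncturedPlane`. -/
def annulusCover (z : ℂ) : Ann :=
  ((z.im / (2 * Real.pi) : ℝ), z.re)

lemma continuous_annulusCover : Continuous annulusCover :=
  ((AddCircle.continuous_mk' 1).comp (Complex.continuous_im.div_const _)).prodMk
    Complex.continuous_re

lemma surjective_annulusCover : Function.Surjective annulusCover := by
  rintro ⟨θ, y⟩
  obtain ⟨x, rfl⟩ := QuotientAddGroup.mk_surjective θ
  exact ⟨⟨y, 2 * Real.pi * x⟩, by simp [annulusCover, mul_div_cancel_left₀]⟩

lemma toPuncturedPlane_comp_annulusCover : toPuncturedPlane ∘ annulusCover = Complex.exp := by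
  ext z
  rw [Function.comp_apply, annulusCover, toPuncturedPlane, AddCircle.toCircle_apply_mk, div_one,
    mul_div_cancel₀ _ Real.two_pi_pos.ne', Circle.coe_exp, Complex.ofReal_exp, ← Complex.exp_add,
    Complex.re_add_im]

lemma isOpenMap_toPuncturedPlane : IsOpenMap toPuncturedPlane :=
  .of_comp continuous_annulusCover surjective_annulusCover
    (toPuncturedPlane_comp_annulusCover ▸ Complex.isOpenMap_exp)

lemma isOpenEmbedding_toPuncturedPlane : IsOpenEmbedding toPuncturedPlane :=
  .of_continuous_injective_isOpenMap continuous_toPuncturedPlane injective_toPuncturedPlane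
    isOpenMap_toPuncturedPlane

lemma range_toPuncturedPlane : range toPuncturedPlane = {0}ᶜ := by
  rw [← surjective_annulusCover.range_comp, toPuncturedPlane_comp_annulusCover, Complex.range_exp]

lemma lowerEnd_eq_comap_toPuncturedPlane : lowerEnd = comap toPuncturedPlane (𝓝 0) := by
  have hnorm : norm ∘ toPuncturedPlane = Real.exp ∘ Prod.snd := funext norm_toPuncturedPlane
  rw [← comap_norm_nhds_zero, comap_comap, hnorm, ← comap_comap, Real.comap_exp_nhds_zero, lowerEnd]

lemma isPreconnected_inter_of_compl_mem_lowerEnd (hF : IsClosed F) (hG : IsClosed G)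
    (hFconn : IsPreconnected F) (hGconn : IsPreconnected G) (hFG : F ∪ G = univ)
    (hG₀ : Gᶜ ∈ lowerEnd) : IsPreconnected (F ∩ G) :=
  isPreconnected_inter_of_isOpenEmbedding isUnicoherent_of_simplyConnectedSpace
    isOpenEmbedding_toPuncturedPlane range_toPuncturedPlane hF hG hFconn hGconn hFG
    (lowerEnd_eq_comap_toPuncturedPlane ▸ hG₀)

instance : LocallyConnectedSpace Ann :=
  isOpenEmbedding_toPuncturedPlane.locallyConnectedSpace

lemma isCompact_of_compl_mem_ends (hE : IsClosed E) (hlower : Eᶜ ∈ lowerEnd)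
    (hupper : Eᶜ ∈ upperEnd) : IsCompact E := by
  obtain ⟨c, hc⟩ := compl_mem_lowerEnd_iff.1 hlower
  obtain ⟨d, hd⟩ := compl_mem_upperEnd_iff.1 hupper
  exact (isCompact_univ.prod isCompact_Icc).of_isClosed_subset hE fun p hp =>
    ⟨mem_univ _, hc (mem_image_of_mem _ hp), hd (mem_image_of_mem _ hp)⟩

lemma compl_mem_lowerEnd_of_isCompact (hE : IsCompact E) : Eᶜ ∈ lowerEnd :=
  compl_mem_lowerEnd_iff.2 (hE.image continuous_snd).bddBelow

lemma compl_mem_upperEnd_of_isCompact (hE : IsCompact E) : Eᶜ ∈ upperEnd :=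
  compl_mem_upperEnd_iff.2 (hE.image continuous_snd).bddAbove

lemma isCompact_compl_union (hVo : IsOpen V) (hWo : IsOpen W) (hV : V ∈ upperEnd)
    (hW : W ∈ lowerEnd) : IsCompact (V ∪ W)ᶜ := by
  refine isCompact_of_compl_mem_ends (hVo.union hWo).isClosed_compl ?_ ?_ <;> rw [compl_compl]
  · exact mem_of_superset hW subset_union_right
  · exact mem_of_superset hV subset_union_left

lemma isPreconnected_compl_union (hVo : IsOpen V) (hWo : IsOpen W) (hVW : Disjoint V W)
    (hVc : IsPreconnected Vᶜ) (hWc : IsPreconnected Wᶜ) (hW : W ∈ lowerEnd) :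
    IsPreconnected (V ∪ W)ᶜ := by
  have hcover : Vᶜ ∪ Wᶜ = univ := by rw [← compl_inter, hVW.inter_eq, compl_empty]
  rw [compl_union]
  exact isPreconnected_inter_of_compl_mem_lowerEnd hVo.isClosed_compl hWo.isClosed_compl hVc hWc
    hcover (by rwa [compl_compl])

lemma isAnnularContinuum_compl_union (hVo : IsOpen V) (hWo : IsOpen W) (hVconn : IsConnected V)
    (hWconn : IsConnected W) (hVW : Disjoint V W) (hVc : IsPreconnected Vᶜ)
    (hWc : IsPreconnected Wᶜ) (hV : V ∈ upperEnd) (hW : W ∈ lowerEnd) :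
    IsAnnularContinuum (V ∪ W)ᶜ := by
  have hcompV (z : Ann) (hz : z ∈ V) : connectedComponentIn (V ∪ W) z = V :=
    (isComponentIn_union_left hVo hWo hVconn hVW).connectedComponentIn_eq hz
  have hcompW (z : Ann) (hz : z ∈ W) : connectedComponentIn (V ∪ W) z = W := by
    rw [union_comm]
    exact (isComponentIn_union_left hWo hVo hWconn hVW.symm).connectedComponentIn_eq hz
  obtain ⟨v, hv⟩ := hVconn.nonempty
  obtain ⟨w, hw⟩ := hWconn.nonempty
  refine ⟨isCompact_compl_union hVo hWo hV hW,
    ⟨compl_union_nonempty hVo hWo ⟨v, hv⟩ ⟨w, hw⟩ hVW,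
      isPreconnected_compl_union hVo hWo hVW hVc hWc hW⟩, ?unbounded, v, w, ?components⟩
  case unbounded =>
    rw [compl_compl]
    rintro z (hz | hz) ⟨habove, hbelow⟩
    · rw [hcompV z hz] at habove
      exact unbAbove_of_mem_upperEnd hV habove
    · rw [hcompW z hz] at hbelow
      exact unbBelow_of_mem_lowerEnd hW hbelow
  case components =>
    rw [compl_compl, hcompV v hv, hcompW w hw]
    exact ⟨Or.inl hv, Or.inr hw, hVW.ne hVconn.nonempty.ne_empty,
      fun z => Or.imp (hcompV z) (hcompW z)⟩

lemma IsAnnularContinuum.compl_eq_endComponent_union (hE : IsAnnularContinuum E) :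
    Eᶜ = endComponent upperEnd E ∪ endComponent lowerEnd E := by
  obtain ⟨hcompact, -, hunbounded, -⟩ := hE
  simp only [endComponent, hcompact.isClosed.closure_eq, ← unbAbove_iff_frequently,
    ← unbBelow_iff_frequently]
  ext z
  have := hunbounded z
  simp only [BoundedA, UnbAbove, UnbBelow, mem_union, mem_ofPred_eq] at this ⊢
  tauto

lemma IsAnnularContinuum.disjoint_endComponent (hE : IsAnnularContinuum E) :
    Disjoint (endComponent upperEnd E) (endComponent lowerEnd E) := by
  have hcompl := hE.compl_eq_endComponent_union
  obtain ⟨hcompact, -, -, x, y, hx, hy, hxy, -⟩ := hE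
  have hupper := isConnectedEnd_upperEnd.isComponentIn_endComponent
    (compl_mem_upperEnd_of_isCompact hcompact)
  have hlower := isConnectedEnd_lowerEnd.isComponentIn_endComponent
    (compl_mem_lowerEnd_of_isCompact hcompact)
  rw [hcompact.isClosed.closure_eq] at hupper hlower
  rw [disjoint_iff_inter_eq_empty, ← not_nonempty_iff_eq_empty]
  intro hne
  rw [← hupper.eq_of_inter_nonempty hlower hne, union_self] at hcompl
  apply hxy
  rw [hupper.connectedComponentIn_eq (hcompl ▸ hx), hupper.connectedComponentIn_eq (hcompl ▸ hy)]

lemma AreMutualComponents.eq_compl_union_of_isAnnularContinuum (h : AreMutualComponents V W)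
    (hV : V ∈ upperEnd) (hW : W ∈ lowerEnd) (hEVW : E ⊆ (V ∪ W)ᶜ) (hE : IsAnnularContinuum E) :
    E = (V ∪ W)ᶜ := by
  have hdisj := hE.disjoint_endComponent
  have hVWE : V ∪ W ⊆ (closure E)ᶜ := by
    rw [hE.1.isClosed.closure_eq]
    exact subset_compl_comm.1 hEVW
  have hupper := isConnectedEnd_upperEnd.isComponentIn_endComponent
    (compl_mem_upperEnd_of_isCompact hE.1)
  have hlower := isConnectedEnd_lowerEnd.isComponentIn_endComponent
    (compl_mem_lowerEnd_of_isCompact hE.1)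
  have hVsub : V ⊆ endComponent upperEnd E :=
    isConnectedEnd_upperEnd.subset_endComponent h.left.isConnected.isPreconnected
      (subset_union_left.trans hVWE) hV
  have hWsub : W ⊆ endComponent lowerEnd E :=
    isConnectedEnd_lowerEnd.subset_endComponent h.right.isConnected.isPreconnected
      (subset_union_right.trans hVWE) hW
  have hsubV : endComponent upperEnd E ⊆ V :=
    h.subset_left (hupper.isOpen isClosed_closure.isOpen_compl) hupper.isConnected.isPreconnected
      (hdisj.mono_right hWsub) hVsub
  have hsubW : endComponent lowerEnd E ⊆ W :=
    h.symm.subset_left (hlower.isOpen isClosed_closure.isOpen_compl)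
      hlower.isConnected.isPreconnected (hdisj.mono_left hVsub).symm hWsub
  rw [← hsubV.antisymm hVsub, ← hsubW.antisymm hWsub, ← hE.compl_eq_endComponent_union, compl_compl]

theorem AreMutualComponents.isCircloidA_compl_union (h : AreMutualComponents V W)
    (hV : V ∈ upperEnd) (hW : W ∈ lowerEnd) : IsCircloidA (V ∪ W)ᶜ :=
  ⟨isAnnularContinuum_compl_union h.isOpen_left h.symm.isOpen_left h.left.isConnected
      h.right.isConnected h.disjoint h.isPreconnected_compl_left h.symm.isPreconnected_compl_left
      hV hW,
    fun _ hEVW hE => h.eq_compl_union_of_isAnnularContinuum hV hW hEVW hE⟩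

lemma UpperGen.compl_mem_lowerEnd (hS : UpperGen S) : Sᶜ ∈ lowerEnd :=
  compl_mem_lowerEnd_iff.2 hS.1

lemma LowerGen.compl_mem_upperEnd (hS : LowerGen S) : Sᶜ ∈ upperEnd :=
  compl_mem_upperEnd_iff.2 hS.1

lemma UpperGen.compl_endComponent_mem_upperEnd (hS : UpperGen S) :
    (endComponent lowerEnd S)ᶜ ∈ upperEnd := by
  have hbelow := unbBelow_of_mem_lowerEnd
    (isConnectedEnd_lowerEnd.endComponent_mem hS.compl_mem_lowerEnd)
  obtain ⟨z, hz, hcomp⟩ := isConnectedEnd_lowerEnd.isComponentIn_endComponent hS.compl_mem_lowerEnd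
  rw [← hcomp] at hbelow ⊢
  exact compl_mem_upperEnd_iff.2 (not_not.1 fun habove => hS.2 z hz ⟨habove, hbelow⟩)

lemma LowerGen.compl_endComponent_mem_lowerEnd (hS : LowerGen S) :
    (endComponent upperEnd S)ᶜ ∈ lowerEnd := by
  have habove := unbAbove_of_mem_upperEnd
    (isConnectedEnd_upperEnd.endComponent_mem hS.compl_mem_upperEnd)
  obtain ⟨z, hz, hcomp⟩ := isConnectedEnd_upperEnd.isComponentIn_endComponent hS.compl_mem_upperEnd
  rw [← hcomp] at habove ⊢
  exact compl_mem_lowerEnd_iff.2 (not_not.1 fun hbelow => hS.2 z hz ⟨habove, hbelow⟩)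

theorem UpperGen.isCircloidA_Cminus (hS : UpperGen S) : IsCircloidA (Cminus S) := by
  have hl := isConnectedEnd_lowerEnd
  have hu := isConnectedEnd_upperEnd
  have hL := hl.endComponent_mem hS.compl_mem_lowerEnd
  simp only [Cminus, lowerComp_eq_endComponent, upperComp_eq_endComponent]
  exact (hl.areMutualComponents_endComponent hu hS.compl_mem_lowerEnd
    hS.compl_endComponent_mem_upperEnd).isCircloidA_compl_union
    (hu.endComponent_mem hS.compl_endComponent_mem_upperEnd)
    (hl.endComponent_mem (compl_endComponent_mem upperEnd hL))

theorem LowerGen.isCircloidA_Cplus (hS : LowerGen S) : IsCircloidA (Cplus S) := by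
  have hl := isConnectedEnd_lowerEnd
  have hu := isConnectedEnd_upperEnd
  have hU := hu.endComponent_mem hS.compl_mem_upperEnd
  simp only [Cplus, lowerComp_eq_endComponent, upperComp_eq_endComponent]
  rw [union_comm]
  exact (hu.areMutualComponents_endComponent hl hS.compl_mem_upperEnd
    hS.compl_endComponent_mem_lowerEnd).symm.isCircloidA_compl_union
    (hu.endComponent_mem (compl_endComponent_mem lowerEnd hU))
    (hl.endComponent_mem hS.compl_endComponent_mem_lowerEnd)

end Annulus

/-- **Lemma 3.2.**  If `U` is an upper generating set then `𝒞⁻(U)` is a circloid, and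
if `L` is a lower generating set then `𝒞⁺(L)` is a circloid. -/
theorem statement9 :
    (∀ U : Set Ann, UpperGen U → IsCircloidA (Cminus U)) ∧
    (∀ L : Set Ann, LowerGen L → IsCircloidA (Cplus L)) :=
  ⟨fun _ hU => hU.isCircloidA_Cminus, fun _ hL => hL.isCircloidA_Cplus⟩
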